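/- Every perfect Jacobson pair (A,I) is a left unique factorization pair: if F1(x), F2(x), G1(x), G2(x) ∈ A[x] are monic polynomials with F1(x)·F2(x) = G1(x)·G2(x), F1(x) − G1(x) ∈ I[x], F2(x) − G2(x) ∈ I[x], and the reductions F̄1(x), F̄2(x) ∈ (A/I)[x] are left coprime, then F1(x) = G1(x) and F2(x) = G2(x). -/

import Mathlib

open Polynomial

universe u

/-- A morphism of pairs `(A,I) → (B,J)`: a ring homomorphism `φ : A → B` with
`φ ⁻¹(J) = I`. -/
def IsPairHom {A B : Type*} [Ring A] [Ring B] (I : TwoSidedIdeal A)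
    (J : TwoSidedIdeal B) (φ : A →+* B) : Prop :=
  ∀ a : A, φ a ∈ J ↔ a ∈ I

/-- The commutator filtration of the pair `(A,I)`, indexed from `0`:
`commFilt I 0 = I^(1) = I` and `commFilt I (n+1) = I^(n+2)` is the two-sided ideal
generated by the commutators `[A, I^(n+1)]`. -/
def commFilt {A : Type*} [Ring A] (I : TwoSidedIdeal A) : ℕ → TwoSidedIdeal A
  | 0 => I
  | n + 1 => TwoSidedIdeal.span {x | ∃ a b : A, b ∈ commFilt I n ∧ x = a * b - b * a}

/-- A pair `(A,I)` is perfect if the intersection of its commutator filtration is `{0}`. -/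
def IsPerfectPair {A : Type*} [Ring A] (I : TwoSidedIdeal A) : Prop :=
  ∀ x : A, (∀ n, x ∈ commFilt I n) → x = 0

/-- A pair `(A,I)` is a Jacobson pair if `I` is contained in the Jacobson radical of `A`;
for a two-sided ideal this is equivalent to `1 + a` being a unit for every `a ∈ I`. -/
def IsJacobsonPair {A : Type*} [Ring A] (I : TwoSidedIdeal A) : Prop :=
  ∀ a ∈ I, IsUnit (1 + a)

/-- `f₁, f₂ ∈ A[x]` are left coprime: `A[x]f₁ + A[x]f₂ = A[x]`, equivalently there are
`g₁, g₂` with `g₁f₁ + g₂f₂ = 1`. -/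
def LeftCoprime {A : Type*} [Semiring A] (f1 f2 : A[X]) : Prop :=
  ∃ g1 g2 : A[X], g1 * f1 + g2 * f2 = 1

/-- A pair `(A,I)` is left Henselian: it is a Jacobson pair, and every factorization of
the reduction of a monic polynomial into left coprime monic factors lifts uniquely. -/
def IsLeftHenselianPair {A : Type*} [Ring A] (I : TwoSidedIdeal A) : Prop :=
  IsJacobsonPair I ∧
  ∀ F : A[X], F.Monic →
    ∀ f1 f2 : (I.ringCon.Quotient)[X], f1.Monic → f2.Monic → LeftCoprime f1 f2 →
      F.map (I.ringCon.mk') = f1 * f2 →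
      ∃! p : A[X] × A[X], p.1.Monic ∧ p.2.Monic ∧ F = p.1 * p.2 ∧
        p.1.map I.ringCon.mk' = f1 ∧ p.2.map I.ringCon.mk' = f2

/-- A ring homomorphism is local if it sends every nonunit to a nonunit. -/
def RingHomIsLocal {A B : Type*} [Ring A] [Ring B] (φ : A →+* B) : Prop :=
  ∀ a : A, ¬ IsUnit a → ¬ IsUnit (φ a)

/-- `φ : (A,I) → (H,J)` is a left Henselization of the perfect pair `(A,I)`:
`(H,J)` is a perfect left Henselian pair and every morphism of pairs from `(A,I)` to a
perfect left Henselian pair factors uniquely through `φ`. -/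
def IsLeftHenselization {A H : Type u} [Ring A] [Ring H] (I : TwoSidedIdeal A)
    (J : TwoSidedIdeal H) (φ : A →+* H) : Prop :=
  IsPairHom I J φ ∧ IsPerfectPair J ∧ IsLeftHenselianPair J ∧
  ∀ (B : Type u) (_ : Ring B) (K : TwoSidedIdeal B) (ψ0 : A →+* B),
    IsPairHom I K ψ0 → IsPerfectPair K → IsLeftHenselianPair K →
    ∃! ψ : H →+* B, IsPairHom J K ψ ∧ ψ0 = ψ.comp φ

lemma aux_mk_eq_zero {A : Type*} [Ring A] (J : TwoSidedIdeal A) (a : A) :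
    J.ringCon.mk' a = 0 ↔ a ∈ J := by
  rw [TwoSidedIdeal.mem_iff, ← map_zero J.ringCon.mk']
  exact RingCon.eq _

lemma aux_map_eq_zero {A : Type*} [Ring A] (J : TwoSidedIdeal A) (f : A[X]) :
    f.map J.ringCon.mk' = 0 ↔ ∀ i, f.coeff i ∈ J := by
  rw [Polynomial.ext_iff]
  refine forall_congr' fun i => ?_
  rw [coeff_map, coeff_zero, aux_mk_eq_zero]

lemma aux_span {A : Type*} [Ring A] [Nontrivial A] (F : A[X]) (hF : F.Monic)
    (L : Submodule A A[X]) (hL : ∀ q : A[X], q * F ∈ L) :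
    degreeLT A F.natDegree ⊔ L = ⊤ := by
  rw [eq_top_iff]
  rintro f -
  induction hn : f.degree using WellFoundedLT.induction generalizing f with
  | ind n ih =>
  by_cases h : f.degree < F.natDegree
  · exact Submodule.mem_sup_left (mem_degreeLT.2 h)
  · push Not at h
    have hf0 : f ≠ 0 := by
      rintro rfl
      simp at h
    have hle : F.natDegree ≤ f.natDegree := by
      rw [degree_eq_natDegree hf0] at h
      exact_mod_cast h
    set q : A[X] := C f.leadingCoeff * X ^ (f.natDegree - F.natDegree) with hq
    have hlc : f.leadingCoeff ≠ 0 := leadingCoeff_ne_zero.2 hf0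
    have hdeg : f.degree = (q * F).degree := by
      rw [hF.degree_mul, hq, degree_C_mul_X_pow _ hlc, degree_eq_natDegree hf0,
        degree_eq_natDegree hF.ne_zero]
      norm_cast
      omega
    have hl : f.leadingCoeff = (q * F).leadingCoeff := by
      rw [leadingCoeff_mul_monic hF, hq, leadingCoeff_C_mul_X_pow]
    have hlt := degree_sub_lt_left hdeg hf0 hl
    have := ih _ (hn ▸ hlt) rfl
    have h2 := Submodule.add_mem _ this (Submodule.mem_sup_right (hL q))
    simpa using h2

lemma aux_jac {A : Type*} [Ring A] (I : TwoSidedIdeal A) (hJac : IsJacobsonPair I) :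
    I.asIdeal ≤ Ring.jacobson A := by
  rw [← Ideal.jacobson_bot]
  intro x hx
  rw [TwoSidedIdeal.mem_asIdeal] at hx
  rw [Ideal.mem_jacobson_iff]
  intro y
  obtain ⟨u, hu⟩ := hJac (y * x) (I.mul_mem_left _ _ hx)
  refine ⟨(u⁻¹ : Aˣ), ?_⟩
  rw [Ideal.mem_bot, sub_eq_zero]
  calc _ = (u⁻¹ : Aˣ) * (1 + y * x) := by noncomm_ring
    _ = 1 := by rw [← hu]; simp

lemma aux_coprime {A : Type*} [Ring A] [Nontrivial A] (I : TwoSidedIdeal A)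
    (hJac : IsJacobsonPair I) (F G : A[X]) (hF : F.Monic)
    (hcop : LeftCoprime (F.map I.ringCon.mk') (G.map I.ringCon.mk')) :
    LeftCoprime F G := by
  obtain ⟨g1, g2, hg⟩ := hcop
  have hsurj : Function.Surjective I.ringCon.mk' := (RingCon.mk'_surjective _)
  obtain ⟨P, rfl⟩ := Polynomial.map_surjective _ hsurj g1
  obtain ⟨Q, rfl⟩ := Polynomial.map_surjective _ hsurj g2
  have hD : ∀ i, (1 - (P * F + Q * G)).coeff i ∈ I := by
    rw [← aux_map_eq_zero]
    simp [hg]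
  set D := 1 - (P * F + Q * G) with hDdef
  let L : Submodule A A[X] := (Ideal.span {F, G} : Ideal A[X]).restrictScalars A
  have hLF : ∀ q : A[X], q * F ∈ L := fun q =>
    Ideal.mul_mem_left _ _ (Ideal.subset_span (by simp))
  have hLG : ∀ q : A[X], q * G ∈ L := fun q =>
    Ideal.mul_mem_left _ _ (Ideal.subset_span (by simp))
  have hspan := aux_span F hF L hLF
  have hfg : (⊤ : Submodule A (A[X] ⧸ L)).FG := by
    have h1 : (degreeLT A F.natDegree).FG := by
      classical
      rw [degreeLT_eq_span_X_pow]
      exact ⟨_, rfl⟩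
    have h2 := h1.map L.mkQ
    convert h2
    have h3 := congrArg (Submodule.map L.mkQ) hspan
    rw [Submodule.map_sup, Submodule.mkQ_map_self, sup_bot_eq] at h3
    rw [h3, Submodule.map_top, Submodule.range_mkQ]
  have hle : (⊤ : Submodule A (A[X] ⧸ L)) ≤ Ring.jacobson A • ⊤ := by
    rintro m -
    obtain ⟨f, rfl⟩ := L.mkQ_surjective m
    have e : f = f * D + ((f * P) * F + (f * Q) * G) := by
      rw [hDdef]; noncomm_ring
    have e2 : L.mkQ f = L.mkQ (f * D) := by
      rw [← sub_eq_zero, ← map_sub]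
      have : f - f * D = (f * P) * F + (f * Q) * G := by
        rw [hDdef]; noncomm_ring
      rw [this, Submodule.mkQ_apply, Submodule.Quotient.mk_eq_zero]
      exact L.add_mem (hLF _) (hLG _)
    have hc : ∀ i, (f * D).coeff i ∈ I := by
      rw [← aux_map_eq_zero] at hD ⊢
      rw [Polynomial.map_mul, hD, mul_zero]
    rw [e2, (f * D).as_sum_support, map_sum]
    refine Submodule.sum_mem _ fun i _ => ?_
    have : monomial i ((f * D).coeff i) = (f * D).coeff i • (X ^ i : A[X]) := by
      rw [smul_X_eq_monomial]
    rw [this, map_smul]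
    exact Submodule.smul_mem_smul (aux_jac I hJac (TwoSidedIdeal.mem_asIdeal.2 (hc i))) trivial
  have hbot := hfg.eq_bot_of_le_jacobson_smul hle
  have h1 : L.mkQ 1 = 0 := by
    have : L.mkQ 1 ∈ (⊤ : Submodule A (A[X] ⧸ L)) := trivial
    rw [hbot] at this
    simpa using this
  rw [Submodule.mkQ_apply, Submodule.Quotient.mk_eq_zero] at h1
  have h2 : (1 : A[X]) ∈ Ideal.span {F, G} := h1
  obtain ⟨a, b, hab⟩ := Submodule.mem_span_pair.1 h2
  exact ⟨a, b, hab⟩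

/-- The key step, in a ring where the differences are central. -/
lemma aux_central {B : Type*} [Ring B] (F1 F2 D1 D2 P Q : B[X]) (hF1 : F1.Monic)
    (hc1 : ∀ f, Commute D1 f) (hc2 : ∀ f, Commute D2 f)
    (heq : F1 * F2 = (F1 + D1) * (F2 + D2)) (hdeg : D1.degree < F1.degree)
    (hPQ : P * F1 + Q * (F2 + D2) = 1) : D1 = 0 ∧ D2 = 0 := by
  have h0 : D1 * (F2 + D2) = - (D2 * F1) := by
    rw [(hc2 F1).eq, eq_neg_iff_add_eq_zero]
    have : F1 * F2 + (D1 * (F2 + D2) + F1 * D2) = (F1 + D1) * (F2 + D2) := by noncomm_ring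
    rw [← heq] at this
    simpa using this
  have h1 : D1 = (P * D1 - Q * D2) * F1 := by
    calc D1 = D1 * (P * F1 + Q * (F2 + D2)) := by rw [hPQ, mul_one]
      _ = (D1 * P) * F1 + (D1 * Q) * (F2 + D2) := by noncomm_ring
      _ = (P * D1) * F1 + Q * (D1 * (F2 + D2)) := by
        rw [(hc1 P).eq, (hc1 Q).eq, mul_assoc Q]
      _ = _ := by rw [h0]; noncomm_ring
  have hE : P * D1 - Q * D2 = 0 := by
    by_contra hE
    rw [h1, hF1.degree_mul, degree_eq_natDegree hE] at hdeg
    refine absurd hdeg (not_lt.2 ?_)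
    exact le_add_of_nonneg_left (by exact_mod_cast Nat.zero_le _)
  have hD1 : D1 = 0 := by rw [h1, hE, zero_mul]
  refine ⟨hD1, ?_⟩
  rw [hD1, zero_mul, eq_comm, neg_eq_zero] at h0
  exact hF1.mul_left_eq_zero_iff.1 h0

lemma aux_commute {A : Type*} [Ring A] (J K : TwoSidedIdeal A)
    (h : ∀ a b, b ∈ J → a * b - b * a ∈ K) (D : A[X]) (hD : ∀ i, D.coeff i ∈ J)
    (f : K.ringCon.Quotient[X]) : Commute (D.map K.ringCon.mk') f := by
  obtain ⟨f, rfl⟩ := Polynomial.map_surjective _ (RingCon.mk'_surjective _) f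
  have : ∀ i j, K.ringCon.mk' (D.coeff i) * K.ringCon.mk' (f.coeff j) =
      K.ringCon.mk' (f.coeff j) * K.ringCon.mk' (D.coeff i) := by
    intro i j
    have := (aux_mk_eq_zero K _).2 (h (f.coeff j) (D.coeff i) (hD i))
    rw [map_sub, map_mul, map_mul, sub_eq_zero] at this
    exact this.symm
  ext n
  rw [coeff_mul, coeff_mul, ← Finset.Nat.sum_antidiagonal_swap]
  refine Finset.sum_congr rfl fun p _ => ?_
  simp only [coeff_map, Prod.fst_swap, Prod.snd_swap]
  exact this _ _

/-- Proposition `uniquenesslifting`: every perfect Jacobson pair is a left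
unique factorization pair. -/
theorem perfect_jacobson_LUFP {A : Type*} [Ring A] (I : TwoSidedIdeal A)
    (hperf : IsPerfectPair I) (hJac : IsJacobsonPair I)
    (F1 F2 G1 G2 : A[X])
    (hF1 : F1.Monic) (hF2 : F2.Monic) (hG1 : G1.Monic) (hG2 : G2.Monic)
    (heq : F1 * F2 = G1 * G2)
    (hd1 : ∀ i, (F1 - G1).coeff i ∈ I) (hd2 : ∀ i, (F2 - G2).coeff i ∈ I)
    (hcop : LeftCoprime (F1.map I.ringCon.mk') (F2.map I.ringCon.mk')) :
    F1 = G1 ∧ F2 = G2 := by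
  rcases subsingleton_or_nontrivial A with hA | hA
  · exact ⟨Subsingleton.elim _ _, Subsingleton.elim _ _⟩
  have hone : (1 : A) ∉ I := by
    intro h
    have := hJac (-1) (I.neg_mem h)
    simp at this
  have hnt : Nontrivial I.ringCon.Quotient := by
    refine ⟨⟨I.ringCon.mk' 1, 0, ?_⟩⟩
    rwa [Ne, aux_mk_eq_zero]
  have hm1 : F1.map I.ringCon.mk' = G1.map I.ringCon.mk' := by
    rw [← sub_eq_zero, ← Polynomial.map_sub, aux_map_eq_zero]
    exact hd1
  have hm2 : F2.map I.ringCon.mk' = G2.map I.ringCon.mk' := by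
    rw [← sub_eq_zero, ← Polynomial.map_sub, aux_map_eq_zero]
    exact hd2
  have hdeg : G1.degree = F1.degree := by
    rw [← hF1.degree_map I.ringCon.mk', ← hG1.degree_map I.ringCon.mk', hm1]
  have hlt : (G1 - F1).degree < F1.degree :=
    degree_sub_lt_right hdeg hF1.ne_zero (by rw [hF1.leadingCoeff, hG1.leadingCoeff])
  rw [hm2] at hcop
  obtain ⟨P, Q, hPQ⟩ := aux_coprime I hJac F1 G2 hF1 hcop
  have key : ∀ n, (∀ i, (G1 - F1).coeff i ∈ commFilt I n) ∧
      (∀ i, (G2 - F2).coeff i ∈ commFilt I n) := by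
    intro n
    induction n with
    | zero =>
      constructor
      · intro i
        rw [← neg_sub, coeff_neg]
        exact I.neg_mem (hd1 i)
      · intro i
        rw [← neg_sub, coeff_neg]
        exact I.neg_mem (hd2 i)
    | succ n ih =>
      obtain ⟨ih1, ih2⟩ := ih
      set K := commFilt I (n + 1) with hK
      have hJK : ∀ a b, b ∈ commFilt I n → a * b - b * a ∈ K := by
        intro a b hb
        exact TwoSidedIdeal.subset_span ⟨a, b, hb, rfl⟩
      rw [← aux_map_eq_zero, ← aux_map_eq_zero]
      rcases subsingleton_or_nontrivial K.ringCon.Quotient with hs | hs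
      · exact ⟨Subsingleton.elim _ _, Subsingleton.elim _ _⟩
      refine aux_central (F1.map K.ringCon.mk') (F2.map K.ringCon.mk') _ _
        (P.map K.ringCon.mk') (Q.map K.ringCon.mk') (hF1.map _)
        (aux_commute _ K hJK _ ih1) (aux_commute _ K hJK _ ih2) ?_ ?_ ?_
      · rw [← Polynomial.map_add, ← Polynomial.map_add, ← Polynomial.map_mul,
          ← Polynomial.map_mul, heq]
        simp
      · rw [hF1.degree_map]
        exact lt_of_le_of_lt degree_map_le hlt
      · rw [← Polynomial.map_add, ← Polynomial.map_mul, ← Polynomial.map_mul,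
          ← Polynomial.map_add, add_sub_cancel, hPQ, Polynomial.map_one]
  constructor
  · refine (sub_eq_zero.1 ?_).symm
    ext i
    exact hperf _ fun n => (key n).1 i
  · refine (sub_eq_zero.1 ?_).symm
    ext i
    exact hperf _ fun n => (key n).2 i
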